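/- Let D ∈ ℝ^{(n+d)×(n+d)} be symmetric positive definite and B̃ ∈ ℝ^{n×(n+d)}. Define λ_ker = min over unit vectors v in ker(B̃) of vᵀDv, and σ_B̃² = min over unit vectors v in the row space of B̃ of vᵀB̃ᵀB̃v. Then for any η ≥ 0, λ_min(D + η B̃ᵀB̃) > λ_ker · min(1/8, η σ_B̃² / (8 λ_max(D))). -/

import Mathlib

open Matrix

lemma aux_dec {m k : ℕ} (B : Matrix (Fin m) (Fin k) ℝ) (v : Fin k → ℝ) :
    ∃ p r : Fin k → ℝ, v = p + r ∧ B.mulVec p = 0 ∧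
      ∀ w : Fin k → ℝ, B.mulVec w = 0 → r ⬝ᵥ w = 0 := by
  obtain ⟨y, hy, z, hz, h⟩ := Submodule.exists_add_mem_mem_orthogonal
    (K := LinearMap.ker (Matrix.toEuclideanLin B)) (WithLp.toLp 2 v)
  refine ⟨y.ofLp, z.ofLp, ?_, ?_, ?_⟩
  · have := congrArg WithLp.ofLp h
    simpa using this
  · rw [LinearMap.mem_ker] at hy
    have := congrArg WithLp.ofLp hy
    simpa using this
  · intro w hw
    have hw' : WithLp.toLp 2 w ∈ LinearMap.ker (Matrix.toEuclideanLin B) := by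
      rw [LinearMap.mem_ker]
      ext i
      simpa using congrFun hw i
    have := (Submodule.mem_orthogonal _ _).1 hz _ hw'
    simpa [EuclideanSpace.inner_eq_star_dotProduct] using this

lemma aux_norm {k : ℕ} (w : Fin k → ℝ) (hw : w ≠ 0) :
    ∃ c : ℝ, c ^ 2 * (w ⬝ᵥ w) = 1 ∧ (c • w) ⬝ᵥ (c • w) = 1 ∧
      ∀ M : Matrix (Fin k) (Fin k) ℝ,
        (c • w) ⬝ᵥ M.mulVec (c • w) = c ^ 2 * (w ⬝ᵥ M.mulVec w) := by
  have hpos : 0 < w ⬝ᵥ w := by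
    have := Matrix.dotProduct_star_self_pos_iff.2 hw
    simpa using this
  have h1 : (Real.sqrt (w ⬝ᵥ w))⁻¹ ^ 2 * (w ⬝ᵥ w) = 1 := by
    rw [inv_pow, Real.sq_sqrt hpos.le]
    exact inv_mul_cancel₀ hpos.ne'
  refine ⟨(Real.sqrt (w ⬝ᵥ w))⁻¹, h1, ?_, ?_⟩
  · rw [← h1]; simp only [smul_dotProduct, dotProduct_smul, smul_eq_mul]; ring
  · intro M
    simp only [smul_dotProduct, dotProduct_smul, mulVec_smul, smul_eq_mul]; ring

lemma aux_le {c x y s : ℝ} (hc : c ^ 2 * s = 1) (hs : 0 ≤ s) (h : x ≤ c ^ 2 * y) : x * s ≤ y := by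
  have := mul_le_mul_of_nonneg_right h hs
  have e : c ^ 2 * y * s = y := by linear_combination y * hc
  linarith

lemma aux_ge {c x y s : ℝ} (hc : c ^ 2 * s = 1) (hs : 0 ≤ s) (h : c ^ 2 * y ≤ x) : y ≤ x * s := by
  have := mul_le_mul_of_nonneg_right h hs
  have e : c ^ 2 * y * s = y := by linear_combination y * hc
  linarith

/-- Let `D` be symmetric positive definite and `B̃ ∈ ℝ^{n×(n+d)}`. With
`λ_ker` the minimum Rayleigh quotient of `D` over unit vectors in `ker B̃`,
`σ_B̃²` the minimum Rayleigh quotient of `B̃ᵀB̃` over unit vectors in the row space of `B̃`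
(the orthogonal complement of `ker B̃`), `λ_min` the smallest eigenvalue of `D + ηB̃ᵀB̃`
and `λ_max` the largest eigenvalue of `D` (both characterized by their Rayleigh
quotients), for any `η ≥ 0`:
`λ_min(D + ηB̃ᵀB̃) > λ_ker · min(1/8, ησ_B̃²/(8λ_max(D)))`. -/
theorem stmt8 {n d : ℕ} (D : Matrix (Fin (n + d)) (Fin (n + d)) ℝ)
    (Bt : Matrix (Fin n) (Fin (n + d)) ℝ)
    (hD : D.PosDef) (η : ℝ) (hη : 0 ≤ η)
    (lamKer sigB lamMin lamMax : ℝ)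
    (hker : IsLeast {x | ∃ v : Fin (n + d) → ℝ,
        v ⬝ᵥ v = 1 ∧ Bt.mulVec v = 0 ∧ x = v ⬝ᵥ D.mulVec v} lamKer)
    (hsig : IsLeast {x | ∃ v : Fin (n + d) → ℝ,
        v ⬝ᵥ v = 1 ∧ (∀ w : Fin (n + d) → ℝ, Bt.mulVec w = 0 → v ⬝ᵥ w = 0) ∧
        x = v ⬝ᵥ (Btᵀ * Bt).mulVec v} sigB)
    (hmin : IsLeast {x | ∃ v : Fin (n + d) → ℝ,
        v ⬝ᵥ v = 1 ∧ x = v ⬝ᵥ (D + η • (Btᵀ * Bt)).mulVec v} lamMin)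
    (hmax : IsGreatest {x | ∃ v : Fin (n + d) → ℝ,
        v ⬝ᵥ v = 1 ∧ x = v ⬝ᵥ D.mulVec v} lamMax) :
    lamKer * min (1 / 8) (η * sigB / (8 * lamMax)) < lamMin := by
  have nn : ∀ w : Fin (n + d) → ℝ, 0 ≤ w ⬝ᵥ w := fun w => by
    have := dotProduct_self_star_nonneg w
    simpa using this
  have Dpos : ∀ w : Fin (n + d) → ℝ, w ≠ 0 → 0 < w ⬝ᵥ D.mulVec w := fun w hw => by
    simpa using hD.dotProduct_mulVec_pos hw
  have Dnn : ∀ w : Fin (n + d) → ℝ, 0 ≤ w ⬝ᵥ D.mulVec w := fun w => by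
    by_cases hw : w = 0
    · simp [hw]
    · exact (Dpos w hw).le
  have Beq : ∀ w : Fin (n + d) → ℝ,
      w ⬝ᵥ (Btᵀ * Bt).mulVec w = Bt.mulVec w ⬝ᵥ Bt.mulVec w := fun w => by
    rw [← mulVec_mulVec, dotProduct_mulVec, vecMul_transpose]
  have ne : ∀ w : Fin (n + d) → ℝ, w ⬝ᵥ w = 1 → w ≠ 0 := by
    rintro w hw rfl
    simp at hw
  have kerB : ∀ w : Fin (n + d) → ℝ, Bt.mulVec w = 0 →
      lamKer * (w ⬝ᵥ w) ≤ w ⬝ᵥ D.mulVec w := fun w hw => by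
    by_cases h0 : w = 0
    · simp [h0]
    obtain ⟨c, hc, h1, h2⟩ := aux_norm w h0
    exact aux_le hc (nn w) (hker.2 ⟨c • w, h1, by rw [mulVec_smul, hw, smul_zero], (h2 D).symm⟩)
  have maxB : ∀ w : Fin (n + d) → ℝ, w ⬝ᵥ D.mulVec w ≤ lamMax * (w ⬝ᵥ w) := fun w => by
    by_cases h0 : w = 0
    · simp [h0]
    obtain ⟨c, hc, h1, h2⟩ := aux_norm w h0
    exact aux_ge hc (nn w) (hmax.2 ⟨c • w, h1, (h2 D).symm⟩)
  have sigBd : ∀ w : Fin (n + d) → ℝ, (∀ u : Fin (n + d) → ℝ, Bt.mulVec u = 0 → w ⬝ᵥ u = 0) →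
      sigB * (w ⬝ᵥ w) ≤ Bt.mulVec w ⬝ᵥ Bt.mulVec w := fun w hw => by
    by_cases h0 : w = 0
    · simp [h0]
    obtain ⟨c, hc, h1, h2⟩ := aux_norm w h0
    rw [← Beq]
    refine aux_le hc (nn w) (hsig.2 ⟨c • w, h1, ?_, (h2 _).symm⟩)
    intro u hu
    rw [smul_dotProduct, hw u hu, smul_zero]
  have hK : 0 < lamKer := by
    obtain ⟨v, h1, -, h3⟩ := hker.1
    rw [h3]; exact Dpos v (ne v h1)
  have hKL : lamKer ≤ lamMax := by
    obtain ⟨v, h1, -, h3⟩ := hker.1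
    exact hmax.2 ⟨v, h1, h3⟩
  have hS : 0 ≤ sigB := by
    obtain ⟨v, h1, -, h3⟩ := hsig.1
    rw [h3, Beq]
    have := dotProduct_self_star_nonneg (Bt.mulVec v)
    simpa using this
  have hL : 0 < lamMax := hK.trans_le hKL
  obtain ⟨v, hv1, hv⟩ := hmin.1
  obtain ⟨p, r, rfl, hp, hr⟩ := aux_dec Bt v
  have hQ := Dpos _ (ne _ hv1)
  have hBv : Bt.mulVec (p + r) = Bt.mulVec r := by rw [mulVec_add, hp, zero_add]
  rw [add_mulVec, dotProduct_add, smul_mulVec, dotProduct_smul, Beq, hBv, smul_eq_mul] at hv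
  have hrp : r ⬝ᵥ p = 0 := hr p hp
  have hpr : p ⬝ᵥ r = 0 := by rw [dotProduct_comm]; exact hrp
  have hab : p ⬝ᵥ p + r ⬝ᵥ r = 1 := by
    rw [← hv1]
    simp [add_dotProduct, dotProduct_add, hrp, hpr]
  have hpar : p ⬝ᵥ D.mulVec p ≤ 2 * ((p + r) ⬝ᵥ D.mulVec (p + r)) + 2 * (r ⬝ᵥ D.mulVec r) := by
    have := Dnn (p + r + r)
    simp only [add_dotProduct, dotProduct_add, mulVec_add] at this ⊢
    linarith
  have k1 := kerB p hp
  have k2 := maxB r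
  have k3 := mul_le_mul_of_nonneg_left (sigBd r hr) hη
  have hb := nn r
  set b := r ⬝ᵥ r
  set a := p ⬝ᵥ p
  set Q := (p + r) ⬝ᵥ D.mulVec (p + r)
  set m := min (1 / 8) (η * sigB / (8 * lamMax)) with hm
  have m0 : 0 ≤ m := le_min (by norm_num) (by positivity)
  have m1 : m ≤ 1 / 8 := min_le_left _ _
  have m2 : m * (8 * lamMax) ≤ η * sigB := (le_div_iff₀ (by positivity)).1 (min_le_right _ _)
  have m3 := mul_le_mul_of_nonneg_right m2 hb
  have q1 : lamKer * a ≤ 2 * Q + 2 * (lamMax * b) := by linarith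
  have q2 := mul_le_mul_of_nonneg_left q1 m0
  have q3 : m * Q ≤ 1 / 8 * Q := mul_le_mul_of_nonneg_right m1 hQ.le
  have q4 : m * (lamKer * b) ≤ m * (lamMax * b) := by gcongr
  have q5 : lamKer * m = m * (lamKer * a) + m * (lamKer * b) := by
    linear_combination (-(m * lamKer)) * hab
  have q6 : 0 ≤ m * (lamMax * b) := by positivity
  nlinarith
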